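/- For every k ≥ 2, N_k · w_k = 0, where w_k = (2, −2, 2, …, (−1)^{k−1}·2)ᵀ ∈ ℤ^k; in particular the rank of N_k is at most k − 1. Moreover, for every k ≥ 4: the (k−1) × (k−1) minor of N_k on rows 2, 3, …, k−1, k+1 and columns 2, 3, …, k equals ±2^{k−1}, and the (k−1) × (k−1) minor of N_k on rows 1, 1+(k−1), 1+(k−1)+(k−2), …, C(k,2) and columns 1, 2, …, k−1 equals ±3^{k−1}; in particular N_k has two relatively prime minors of size k − 1. -/

import Mathlib

/-!
The matrix `N_k = e^{(2)}(1, k, D_{k+1})` of the second differential of the complex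
`Hom(P_*(1,k), D_{k+1})` computing `Ext^*(Λ^{k+1}, D_{k+1})` over the integral Schur
algebra (Stergiopoulou, proof of Lemma 2.4).  For `k ≥ 2`, `N_k` has `C(k,2)` rows
and `k` columns; it is defined recursively by `N_2 = (3 3)` and, for `k ≥ 3`,
`N_k = [[v_k, D_k], [0, −N_{k−1}]]`, where `v_k = (3, −2, 2, −2, …, (−1)^{k−2}·2)ᵀ`
is a column vector of size `k − 1` and `D_k = diag(3, 2, …, 2)` of size
`(k−1) × (k−1)`.  Below, `Nmat j` is `N_{j+2}` (so `k = j + 2` ranges over `k ≥ 2`).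
-/

/-- The column vector `(3, −2, 2, −2, …)ᵀ`: first entry `3`, then alternating `∓2`. -/
def vcol (m : ℕ) : Matrix (Fin m) (Fin 1) ℤ :=
  Matrix.of fun i _ => if (i : ℕ) = 0 then 3 else (-1) ^ (i : ℕ) * 2

/-- The diagonal matrix `diag(3, 2, 2, …, 2)`. -/
def dmat (m : ℕ) : Matrix (Fin m) (Fin m) ℤ :=
  Matrix.diagonal fun i => if (i : ℕ) = 0 then 3 else 2

private lemma choose2_step (m : ℕ) : m + 2 + ((m + 2).choose 2) = (m + 3).choose 2 := by
  have h := Nat.choose_succ_succ (m + 2) 1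
  simp only [Nat.succ_eq_add_one, Nat.choose_one_right, show (1 : ℕ) + 1 = 2 from rfl,
    show m + 2 + 1 = m + 3 from rfl] at h
  omega

/-- `Nmat j` is the matrix `N_k` (with `k = j + 2`): `N_2 = (3 3)` and, for `k ≥ 3`,
`N_k` is the block matrix `[[v_k, D_k], [0, −N_{k−1}]]`. -/
def Nmat : (j : ℕ) → Matrix (Fin ((j + 2).choose 2)) (Fin (j + 2)) ℤ
  | 0 => Matrix.of fun _ _ => 3
  | j + 1 =>
    Matrix.reindex
      (finSumFinEquiv.trans (finCongr (choose2_step j)))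
      (finSumFinEquiv.trans (finCongr (by omega)))
      (Matrix.fromBlocks (vcol (j + 2)) (dmat (j + 2)) 0 (-(Nmat j)))

/-!
Both minors are computed by expansion along a first column with a single nonzero entry.
On the rows `2, …, k−1, k+1` that entry is the `2 = −(−2)` in the second row of `−N_{k−1}`, and
deleting it leaves `2 · I`.  On the rows `1, 1+(k−1), 1+(k−1)+(k−2), …`, the first rows of the
successive blocks, that entry is the leading `3`, and deleting it leaves minus the corresponding
minor of `N_{k−1}`.  The kernel relation is also inductive, because `w_k = (2, −w_{k−1})` and
`2 · v_k = D_k w_{k−1}`.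
-/

open Matrix

section General

variable {R : Type*} [CommRing R]

theorem rank_lt_card_of_mulVec_eq_zero [IsDomain R] {m n : Type*} [Fintype n]
    {A : Matrix m n R} {v : n → R} (hv : v ≠ 0) (hAv : A *ᵥ v = 0) :
    A.rank < Fintype.card n := by
  have rank_nullity : A.rank + Module.finrank R (LinearMap.ker A.mulVecLin) = Fintype.card n := by
    rw [Matrix.rank, ← A.mulVecLin.quotKerEquivRange.finrank_eq,
      Submodule.finrank_quotient_add_finrank, Module.finrank_fintype_fun_eq_card]
  have ker_pos : 0 < Module.finrank R (LinearMap.ker A.mulVecLin) := by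
    refine Cardinal.toNat_pos.mpr ⟨(rank_pos_iff_exists_ne_zero.mpr ?_).ne', ?_⟩
    · exact ⟨⟨v, hAv⟩, fun h => hv (congrArg Subtype.val h)⟩
    · exact (Submodule.rank_le _).trans_lt (Module.rank_lt_aleph0 R (n → R))
  omega

theorem det_eq_of_col_zero_eq_zero {n : ℕ} {A : Matrix (Fin (n + 1)) (Fin (n + 1)) R}
    (i : Fin (n + 1)) (hA : ∀ i' ≠ i, A i' 0 = 0) :
    A.det = (-1) ^ (i : ℕ) * A i 0 * (A.submatrix i.succAbove Fin.succ).det := by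
  rw [det_succ_column_zero]
  exact Finset.sum_eq_single i (fun i' _ hi' => by rw [hA i' hi', mul_zero, zero_mul]) (by simp)

theorem neg_one_pow_mul_eq_or_eq_neg (n : ℕ) (a : R) : (-1) ^ n * a = a ∨ (-1) ^ n * a = -a :=
  (neg_one_pow_eq_or R n).imp (fun h => by rw [h, one_mul]) (fun h => by rw [h, neg_one_mul])

end General

/-- The position, among the rows of `N_{j+3}`, of the rows of its upper blocks `v, D` (`Sum.inl`)
and of its lower blocks `0, −N_{j+2}` (`Sum.inr`). -/
def rowEquiv (j : ℕ) : Fin (j + 2) ⊕ Fin ((j + 2).choose 2) ≃ Fin ((j + 1 + 2).choose 2) :=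
  finSumFinEquiv.trans (finCongr (choose2_step j))

/-- The position, among the columns of `N_{j+3}`, of the column of its left blocks `v, 0`
(`Sum.inl`) and of the columns of its right blocks `D, −N_{j+2}` (`Sum.inr`). -/
def colEquiv (j : ℕ) : Fin 1 ⊕ Fin (j + 2) ≃ Fin (j + 1 + 2) :=
  finSumFinEquiv.trans (finCongr (by omega))

@[simp]
theorem val_rowEquiv_inl (j : ℕ) (i : Fin (j + 2)) : (rowEquiv j (.inl i) : ℕ) = i := by
  simp [rowEquiv]

@[simp]
theorem val_rowEquiv_inr (j : ℕ) (r : Fin ((j + 2).choose 2)) :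
    (rowEquiv j (.inr r) : ℕ) = j + 2 + r := by
  simp [rowEquiv]

theorem colEquiv_inl (j : ℕ) (c : Fin 1) : colEquiv j (.inl c) = 0 := by
  ext
  simp [colEquiv]

theorem colEquiv_inr (j : ℕ) (c : Fin (j + 2)) : colEquiv j (.inr c) = c.succ := by
  ext
  simp [colEquiv]

section Blocks

variable (j : ℕ)

theorem Nmat_succ : Nmat (j + 1) = reindex (rowEquiv j) (colEquiv j)
    (fromBlocks (vcol (j + 2)) (dmat (j + 2)) 0 (-Nmat j)) :=
  rfl

theorem Nmat_succ_rowEquiv_colEquiv (r : Fin (j + 2) ⊕ Fin ((j + 2).choose 2))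
    (c : Fin 1 ⊕ Fin (j + 2)) :
    Nmat (j + 1) (rowEquiv j r) (colEquiv j c) =
      fromBlocks (vcol (j + 2)) (dmat (j + 2)) 0 (-Nmat j) r c := by
  rw [Nmat_succ, reindex_apply, submatrix_apply, Equiv.symm_apply_apply, Equiv.symm_apply_apply]

theorem Nmat_succ_inl_zero (i : Fin (j + 2)) :
    Nmat (j + 1) (rowEquiv j (.inl i)) 0 = vcol (j + 2) i 0 := by
  rw [← colEquiv_inl j 0, Nmat_succ_rowEquiv_colEquiv, fromBlocks_apply₁₁]

theorem Nmat_succ_inl_succ (i c : Fin (j + 2)) :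
    Nmat (j + 1) (rowEquiv j (.inl i)) c.succ = dmat (j + 2) i c := by
  rw [← colEquiv_inr, Nmat_succ_rowEquiv_colEquiv, fromBlocks_apply₁₂]

theorem Nmat_succ_inr_zero (r : Fin ((j + 2).choose 2)) :
    Nmat (j + 1) (rowEquiv j (.inr r)) 0 = 0 := by
  rw [← colEquiv_inl j 0, Nmat_succ_rowEquiv_colEquiv, fromBlocks_apply₂₁, Matrix.zero_apply]

theorem Nmat_succ_inr_succ (r : Fin ((j + 2).choose 2)) (c : Fin (j + 2)) :
    Nmat (j + 1) (rowEquiv j (.inr r)) c.succ = -Nmat j r c := by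
  rw [← colEquiv_inr, Nmat_succ_rowEquiv_colEquiv, fromBlocks_apply₂₂, Matrix.neg_apply]

end Blocks

section Kernel

/-- The kernel vector `w_n = (2, −2, 2, …, (−1)^{n−1}·2)`. -/
def altVec (n : ℕ) : Fin n → ℤ :=
  fun i => (-1) ^ (i : ℕ) * 2

theorem altVec_comp_colEquiv (j : ℕ) :
    altVec (j + 1 + 2) ∘ colEquiv j = Sum.elim (fun _ => 2) (-altVec (j + 2)) := by
  funext c
  rcases c with c | c
  · simp [altVec, colEquiv_inl]
  · simp [altVec, colEquiv_inr, pow_succ]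

theorem dmat_mulVec_altVec (m : ℕ) : dmat m *ᵥ altVec m = vcol m *ᵥ fun _ => 2 := by
  funext i
  rw [dmat, mulVec_diagonal]
  by_cases hi : (i : ℕ) = 0
  · simp [hi, altVec, vcol, mulVec, dotProduct]
  · simp [hi, altVec, vcol, mulVec, dotProduct, mul_comm]

theorem Nmat_mulVec_altVec (j : ℕ) : Nmat j *ᵥ altVec (j + 2) = 0 := by
  induction j with
  | zero =>
    funext r
    simp [Nmat, altVec, mulVec, dotProduct]
  | succ j ih =>
    have upper : vcol (j + 2) *ᵥ (fun _ => 2) + dmat (j + 2) *ᵥ (-altVec (j + 2)) = 0 := by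
      rw [mulVec_neg, dmat_mulVec_altVec, add_neg_cancel]
    have lower : (0 : Matrix _ (Fin 1) ℤ) *ᵥ (fun _ => 2) + -Nmat j *ᵥ (-altVec (j + 2)) = 0 := by
      rw [zero_mulVec, zero_add, neg_mulVec_neg, ih]
    rw [Nmat_succ, reindex_apply, submatrix_mulVec_equiv, Equiv.symm_symm, altVec_comp_colEquiv,
      fromBlocks_mulVec, Sum.elim_comp_inl, Sum.elim_comp_inr, upper, lower, Sum.elim_zero_zero,
      Pi.zero_comp]

theorem altVec_succ_ne_zero (n : ℕ) : altVec (n + 1) ≠ 0 :=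
  fun h => by simpa [altVec] using congrFun h 0

theorem rank_Nmat_le (j : ℕ) : (Nmat j).rank ≤ j + 1 := by
  have h := rank_lt_card_of_mulVec_eq_zero (altVec_succ_ne_zero (j + 1)) (Nmat_mulVec_altVec j)
  rwa [Fintype.card_fin, Nat.lt_succ_iff] at h

end Kernel

section MinorTwo

/-- The rows `2, …, k−1, k+1` (counted from `1`) of `N_k`, where `k = m + 4`: all upper rows but
the first, followed by the second lower row. -/
def minorTwoRow (m : ℕ) : Fin (m + 3) → Fin ((m + 2 + 2).choose 2) :=
  Fin.snoc (α := fun _ => Fin ((m + 2 + 2).choose 2))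
    (fun i : Fin (m + 2) => rowEquiv (m + 1) (.inl i.succ))
    (rowEquiv (m + 1) (.inr (rowEquiv m (.inl 1))))

theorem minorTwoRow_castSucc (m : ℕ) (i : Fin (m + 2)) :
    minorTwoRow m i.castSucc = rowEquiv (m + 1) (.inl i.succ) :=
  Fin.snoc_castSucc ..

theorem minorTwoRow_last (m : ℕ) :
    minorTwoRow m (Fin.last (m + 2)) = rowEquiv (m + 1) (.inr (rowEquiv m (.inl 1))) :=
  Fin.snoc_last ..

theorem val_minorTwoRow (m : ℕ) (i : Fin (m + 3)) :
    (minorTwoRow m i : ℕ) = if (i : ℕ) < m + 2 then (i : ℕ) + 1 else m + 2 + 2 := by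
  cases i using Fin.lastCases with
  | last => simp [minorTwoRow_last]
  | cast i => simp [minorTwoRow_castSucc]

theorem dmat_submatrix_succ (m : ℕ) :
    (dmat (m + 1)).submatrix Fin.succ Fin.succ = diagonal fun _ => 2 := by
  rw [dmat, submatrix_diagonal _ _ (Fin.succ_injective m)]
  simp [Function.comp_def]

theorem det_Nmat_submatrix_minorTwoRow (m : ℕ) :
    ((Nmat (m + 2)).submatrix (minorTwoRow m) Fin.succ).det = (-1) ^ (m + 2) * 2 ^ (m + 3) := by
  set A := (Nmat (m + 2)).submatrix (minorTwoRow m) Fin.succ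
  have col_zero (i : Fin (m + 3)) (hi : i ≠ Fin.last _) : A i 0 = 0 := by
    obtain ⟨i, rfl⟩ := Fin.exists_castSucc_eq.mpr hi
    simp only [A, submatrix_apply, minorTwoRow_castSucc, Nmat_succ_inl_succ, dmat,
      diagonal_apply_ne _ (Fin.succ_ne_zero i)]
  have corner : A (Fin.last _) 0 = 2 := by
    simp only [A, submatrix_apply, minorTwoRow_last, Nmat_succ_inr_succ, Nmat_succ_inl_zero]
    simp [vcol]
  have rest : A.submatrix Fin.castSucc Fin.succ = diagonal fun _ => 2 := by
    rw [← dmat_submatrix_succ]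
    ext i c
    simp only [A, submatrix_apply, minorTwoRow_castSucc, Nmat_succ_inl_succ]
  rw [det_eq_of_col_zero_eq_zero _ col_zero, Fin.succAbove_last, corner, rest, det_diagonal,
    Fin.prod_const, Fin.val_last]
  ring

end MinorTwo

section MinorThree

/-- The rows `1, 1+(k−1), 1+(k−1)+(k−2), …, C(k,2)` (counted from `1`) of `N_k`, where `k = j + 2`:
the first upper row, followed by the rows of the same kind of the lower block `−N_{k−1}`. -/
def minorThreeRow : (j : ℕ) → Fin (j + 1) → Fin ((j + 2).choose 2)
  | 0 => id
  | j + 1 => Fin.cons (rowEquiv j (.inl 0)) fun i => rowEquiv j (.inr (minorThreeRow j i))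

theorem minorThreeRow_zero (j : ℕ) : minorThreeRow (j + 1) 0 = rowEquiv j (.inl 0) :=
  rfl

theorem minorThreeRow_succ (j : ℕ) (i : Fin (j + 1)) :
    minorThreeRow (j + 1) i.succ = rowEquiv j (.inr (minorThreeRow j i)) :=
  rfl

theorem val_minorThreeRow (j : ℕ) (i : Fin (j + 1)) :
    (minorThreeRow j i : ℕ) = ∑ t ∈ Finset.range i, (j + 1 - t) := by
  induction j with
  | zero => simp [minorThreeRow, Fin.fin_one_eq_zero i]
  | succ j ih =>
    cases i using Fin.cases with
    | zero => simp [minorThreeRow_zero]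
    | succ i =>
      rw [minorThreeRow_succ, val_rowEquiv_inr, ih, Fin.val_succ, Finset.sum_range_succ']
      simp only [Nat.add_sub_add_right, Nat.sub_zero]
      exact Nat.add_comm ..

theorem det_Nmat_submatrix_minorThreeRow (j : ℕ) :
    ((Nmat j).submatrix (minorThreeRow j) Fin.castSucc).det =
      (-1) ^ (j + 1).choose 2 * 3 ^ (j + 1) := by
  induction j with
  | zero => simp [Nmat]
  | succ j ih =>
    set A := (Nmat (j + 1)).submatrix (minorThreeRow (j + 1)) Fin.castSucc
    have col_zero (i : Fin (j + 2)) (hi : i ≠ 0) : A i 0 = 0 := by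
      obtain ⟨i, rfl⟩ := Fin.exists_succ_eq.mpr hi
      simp only [A, submatrix_apply, minorThreeRow_succ, Fin.castSucc_zero, Nmat_succ_inr_zero]
    have corner : A 0 0 = 3 := by
      simp [A, minorThreeRow_zero, Nmat_succ_inl_zero, vcol]
    have rest : A.submatrix Fin.succ Fin.succ =
        -(Nmat j).submatrix (minorThreeRow j) Fin.castSucc := by
      ext i c
      simp only [A, submatrix_apply, Matrix.neg_apply, minorThreeRow_succ, Fin.castSucc_succ,
        Nmat_succ_inr_succ]
    rw [det_eq_of_col_zero_eq_zero _ col_zero, Fin.succAbove_zero, corner, rest, det_neg, ih,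
      Fintype.card_fin, Fin.val_zero, Nat.choose_succ_succ' (j + 1) 1, Nat.choose_one_right]
    ring

end MinorThree

/-- For every `k ≥ 2`, `N_k · w_k = 0` where `w_k = (2, −2, 2, …, (−1)^{k−1}·2)ᵀ`,
so the rank of `N_k` is at most `k − 1`.  Moreover, for every `k ≥ 4`, the
`(k−1) × (k−1)` minor of `N_k` on rows `2, …, k−1, k+1` and columns `2, …, k`
(1-indexed) equals `±2^{k−1}`, and the minor on rows
`1, 1+(k−1), 1+(k−1)+(k−2), …, C(k,2)` and columns `1, …, k−1` equals `±3^{k−1}`;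
in particular `N_k` has two relatively prime minors of size `k − 1`.
(Here `Nmat j = N_{j+2}`; row/column selections are given 0-indexed, as functions
whose values are pinned by the accompanying equalities.) -/
theorem Nmat_kernel_vector_and_minors :
    (∀ j : ℕ, (Nmat j).mulVec (fun i => (-1 : ℤ) ^ (i : ℕ) * 2) = 0) ∧
    (∀ j : ℕ, (Nmat j).rank ≤ j + 1) ∧
    (∀ j : ℕ, 2 ≤ j →
      (∃ rowsel : Fin (j + 1) → Fin ((j + 2).choose 2),
        ∃ colsel : Fin (j + 1) → Fin (j + 2),
        (∀ i, (rowsel i : ℕ) = if (i : ℕ) < j then (i : ℕ) + 1 else j + 2) ∧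
        (∀ i, (colsel i : ℕ) = (i : ℕ) + 1) ∧
        (((Nmat j).submatrix rowsel colsel).det = 2 ^ (j + 1) ∨
          ((Nmat j).submatrix rowsel colsel).det = -(2 ^ (j + 1)))) ∧
      (∃ rowsel : Fin (j + 1) → Fin ((j + 2).choose 2),
        ∃ colsel : Fin (j + 1) → Fin (j + 2),
        (∀ i, (rowsel i : ℕ) = ∑ t ∈ Finset.range (i : ℕ), (j + 1 - t)) ∧
        (∀ i, (colsel i : ℕ) = (i : ℕ)) ∧
        (((Nmat j).submatrix rowsel colsel).det = 3 ^ (j + 1) ∨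
          ((Nmat j).submatrix rowsel colsel).det = -(3 ^ (j + 1))))) := by
  refine ⟨Nmat_mulVec_altVec, rank_Nmat_le, fun j hj => ⟨?_, ?_⟩⟩
  · obtain ⟨m, rfl⟩ := Nat.exists_eq_add_of_le' hj
    refine ⟨minorTwoRow m, Fin.succ, val_minorTwoRow m, fun _ => rfl, ?_⟩
    rw [det_Nmat_submatrix_minorTwoRow]
    exact neg_one_pow_mul_eq_or_eq_neg _ _
  · refine ⟨minorThreeRow j, Fin.castSucc, val_minorThreeRow j, fun _ => rfl, ?_⟩
    rw [det_Nmat_submatrix_minorThreeRow]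
    exact neg_one_pow_mul_eq_or_eq_neg _ _
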